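/- Consider the first-order Kuramoto model on the complete graph with n vertices with κ = 1 and θ̃(x) = x^α for x ≥ 0, where α > 1 is fixed. Suppose the initial data satisfy ρ_1(0) > ρ_j(0) for all 2 ≤ j ≤ n with ρ_1(0) < 1, and set δ = ρ_1(0) − max_{2≤j≤n} ρ_j(0) > 0. Then every solution ρ satisfies, for all t ≥ 0, ((1 − ρ_1(0))^{1−α} + n(α−1)t)^{−1/(α−1)} ≤ 1 − ρ_1(t) ≤ ((1 − ρ_1(0))^{1−α} + δ·n^{1−α}·(α−1)t)^{−1/(α−1)}; in particular 1 − ρ_1(t) decays at the algebraic rate t^{−1/(α−1)}. -/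

import Mathlib

/-- The maximum of `f` over all vertices different from `i0` (well-defined since `n ≥ 2`). -/
noncomputable def maxExcept {n : ℕ} (hn : 2 ≤ n) (i0 : Fin n) (f : Fin n → ℝ) : ℝ :=
  (Finset.univ.erase i0).sup'
    (by
      rw [Finset.erase_nonempty (Finset.mem_univ i0)]
      exact Finset.one_lt_card_iff_nontrivial.mp
        (by simp only [Finset.card_univ, Fintype.card_fin]; omega)) f

/-!
Write `y = 1 - ρ_i` for the leading vertex `i`. As long as `i` leads, its velocity dominates that of
every other vertex, so the leading gap never shrinks below its initial value `δ`. Every `ρ_k` with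
`k ≠ i` is at most `y`, and these values sum to `y`; hence the power mean inequality and the
gap bound give `δ n^{1-α} y^α ≤ -dy/dt ≤ n y^α`. The substitution `z = y^{1-α}` turns these
differential inequalities into constant bounds on `dz/dt`.
-/

open Set

section ScalarComparison

variable {y y' : ℝ → ℝ} {α c t : ℝ}

theorem pos_of_neg_mul_le_deriv (hy : ∀ s ≥ 0, HasDerivWithinAt y (y' s) (Ici 0) s)
    (hy' : ∀ s ≥ 0, -(c * y s) ≤ y' s) (h0 : 0 < y 0) (ht : 0 ≤ t) : 0 < y t := by
  have gronwall : -y t ≤ gronwallBound (-y 0) (-c) 0 (t - 0) :=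
    le_gronwallBound_of_liminf_deriv_right_le (f := fun s => -y s) (f' := fun s => -y' s)
      (fun s hs => (hy s hs.1).continuousWithinAt.neg.mono Icc_subset_Ici_self)
      (fun s hs _ hr => ((hy s hs.1).neg.mono (Ici_subset_Ici.2 hs.1)).liminf_right_slope_le hr)
      le_rfl (fun s hs => by linarith [hy' s hs.1]) t (right_mem_Icc.2 ht)
  rw [gronwallBound_ε0] at gronwall
  have := mul_pos h0 (Real.exp_pos (-c * (t - 0)))
  linarith

theorem hasDerivWithinAt_rpow_one_sub (hy : ∀ s ≥ 0, HasDerivWithinAt y (y' s) (Ici 0) s)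
    (hpos : ∀ s ≥ 0, 0 < y s) (ht : 0 ≤ t) :
    HasDerivWithinAt (fun s => y s ^ (1 - α)) ((α - 1) * (-y' t / y t ^ α)) (Ici 0) t := by
  convert (hy t ht).rpow_const (p := 1 - α) (Or.inl (hpos t ht).ne') using 1
  rw [show 1 - α - 1 = -α by ring, Real.rpow_neg (hpos t ht).le]
  ring

theorem le_rpow_of_deriv_le_neg_mul_rpow (hα : 1 < α) (hc : 0 ≤ c)
    (hy : ∀ s ≥ 0, HasDerivWithinAt y (y' s) (Ici 0) s) (hpos : ∀ s ≥ 0, 0 < y s)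
    (hy' : ∀ s ≥ 0, y' s ≤ -(c * y s ^ α)) (ht : 0 ≤ t) :
    y t ≤ (y 0 ^ (1 - α) + c * (α - 1) * t) ^ (-(1 / (α - 1))) := by
  have hcont : ContinuousOn (fun s => y s ^ (1 - α)) (Ici 0) := fun s hs =>
    (hasDerivWithinAt_rpow_one_sub hy hpos hs).continuousWithinAt
  have hderiv {s : ℝ} (hs : 0 < s) :=
    (hasDerivWithinAt_rpow_one_sub (α := α) hy hpos hs.le).hasDerivAt (Ici_mem_nhds hs)
  have growth : c * (α - 1) * (t - 0) ≤ y t ^ (1 - α) - y 0 ^ (1 - α) := by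
    refine (convex_Ici 0).mul_sub_le_image_sub_of_le_deriv hcont ?_ ?_
      0 self_mem_Ici t ht ht <;> rw [interior_Ici]
    · exact fun s hs => (hderiv hs).differentiableAt.differentiableWithinAt
    · intro s hs
      have rate : c ≤ -y' s / y s ^ α := by
        rw [le_div_iff₀ (Real.rpow_pos_of_pos (hpos s (le_of_lt hs)) α)]
        linarith [hy' s (le_of_lt hs)]
      rw [(hderiv hs).deriv, mul_comm c]
      exact mul_le_mul_of_nonneg_left rate (by linarith)
  have hbase : 0 < y 0 ^ (1 - α) + c * (α - 1) * t :=
    add_pos_of_pos_of_nonneg (Real.rpow_pos_of_pos (hpos 0 le_rfl) _)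
      (mul_nonneg (mul_nonneg hc (sub_nonneg.2 hα.le)) ht)
  rw [show -(1 / (α - 1)) = (1 - α)⁻¹ by rw [one_div, ← inv_neg, neg_sub],
    Real.le_rpow_inv_iff_of_neg (hpos t ht) hbase (by linarith)]
  linarith

theorem rpow_le_of_neg_mul_rpow_le_deriv (hα : 1 < α)
    (hy : ∀ s ≥ 0, HasDerivWithinAt y (y' s) (Ici 0) s) (hpos : ∀ s ≥ 0, 0 < y s)
    (hy' : ∀ s ≥ 0, -(c * y s ^ α) ≤ y' s) (ht : 0 ≤ t) :
    (y 0 ^ (1 - α) + c * (α - 1) * t) ^ (-(1 / (α - 1))) ≤ y t := by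
  have hcont : ContinuousOn (fun s => y s ^ (1 - α)) (Ici 0) := fun s hs =>
    (hasDerivWithinAt_rpow_one_sub hy hpos hs).continuousWithinAt
  have hderiv {s : ℝ} (hs : 0 < s) :=
    (hasDerivWithinAt_rpow_one_sub (α := α) hy hpos hs.le).hasDerivAt (Ici_mem_nhds hs)
  have growth : y t ^ (1 - α) - y 0 ^ (1 - α) ≤ c * (α - 1) * (t - 0) := by
    refine (convex_Ici 0).image_sub_le_mul_sub_of_deriv_le hcont ?_ ?_
      0 self_mem_Ici t ht ht <;> rw [interior_Ici]
    · exact fun s hs => (hderiv hs).differentiableAt.differentiableWithinAt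
    · intro s hs
      have rate : -y' s / y s ^ α ≤ c := by
        rw [div_le_iff₀ (Real.rpow_pos_of_pos (hpos s (le_of_lt hs)) α)]
        linarith [hy' s (le_of_lt hs)]
      rw [(hderiv hs).deriv, mul_comm c]
      exact mul_le_mul_of_nonneg_left rate (by linarith)
  have hfinal := Real.rpow_pos_of_pos (hpos t ht) (1 - α)
  rw [show -(1 / (α - 1)) = (1 - α)⁻¹ by rw [one_div, ← inv_neg, neg_sub],
    Real.rpow_inv_le_iff_of_neg (by linarith) (hpos t ht) (by linarith)]
  linarith

end ScalarComparison

/- Continuous induction: while the family is at least `δ > 0`, continuity keeps it positive a little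
longer, and on that stretch it is nondecreasing. -/
theorem le_of_nonneg_deriv_of_pos {ι : Type*} [Finite ι] {g g' : ℝ → ι → ℝ} {δ : ℝ}
    (hg : ∀ t ≥ 0, ∀ j, HasDerivWithinAt (fun s => g s j) (g' t j) (Ici 0) t)
    (hg' : ∀ t ≥ 0, (∀ j, 0 < g t j) → ∀ j, 0 ≤ g' t j)
    (hδ : 0 < δ) (h0 : ∀ j, δ ≤ g 0 j) {t : ℝ} (ht : 0 ≤ t) (j : ι) : δ ≤ g t j := by
  have hcont : ∀ j, ContinuousOn (fun s => g s j) (Ici 0) := fun j s hs =>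
    (hg s hs j).continuousWithinAt
  have hclosed : IsClosed ({s | ∀ j, δ ≤ g s j} ∩ Icc 0 t) := by
    rw [inter_comm]
    exact isClosed_Icc.isClosed_le (f := fun _ _ => δ) (g := g) continuousOn_const
      ((continuousOn_pi.2 hcont).mono Icc_subset_Ici_self)
  refine hclosed.Icc_subset_of_forall_mem_nhdsWithin h0 ?_ (right_mem_Icc.2 ht) j
  rintro a ⟨ha, ha0, -⟩
  have hpos : ∀ᶠ s in nhdsWithin a (Ioi a), ∀ j, 0 < g s j :=
    Filter.eventually_all.2 fun j =>
      ((hcont j a ha0).mono (Ioi_subset_Ici ha0)).eventually (lt_mem_nhds (hδ.trans_le (ha j)))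
  obtain ⟨b, hab, hb⟩ := mem_nhdsGT_iff_exists_Ioo_subset.1 hpos
  filter_upwards [Ioo_mem_nhdsGT hab] with s hs j
  have hmono : MonotoneOn (fun r => g r j) (Icc a s) := by
    refine monotoneOn_of_hasDerivWithinAt_nonneg (f' := fun r => g' r j) (convex_Icc a s)
      ((hcont j).mono fun r hr => ha0.trans hr.1) ?_ ?_ <;> rw [interior_Icc] <;> intro r hr
    · exact (hg r (ha0.trans hr.1.le) j).mono fun u hu => ha0.trans hu.1.le
    · exact hg' r (ha0.trans hr.1.le) (hb ⟨hr.1, hr.2.trans hs.2⟩) j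
  exact (ha j).trans (hmono (left_mem_Icc.2 hs.1.le) (right_mem_Icc.2 hs.1.le) hs.1.le)

section VelocityField

variable {ι : Type*} [Fintype ι]

/-- The velocity of vertex `j` at the configuration `x` in the first-order Kuramoto model on the
complete graph with vertex set `ι`; the coupling constant `κ` is absorbed into `θ`. -/
def kuramotoVelocity (θ : ℝ → ℝ) (x : ι → ℝ) (j : ι) : ℝ :=
  ∑ k, θ (min (x j) (x k)) * (x j - x k)

variable {θ : ℝ → ℝ} {x : ι → ℝ} {i j : ι} {α δ : ℝ}

theorem sum_erase_eq_one_sub_of_mem_stdSimplex [DecidableEq ι] (hx : x ∈ stdSimplex ℝ ι) (i : ι) :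
    ∑ k ∈ Finset.univ.erase i, x k = 1 - x i := by
  rw [Finset.sum_erase_eq_sub (Finset.mem_univ i), hx.2]

theorem le_one_sub_of_mem_stdSimplex (hx : x ∈ stdSimplex ℝ ι) (hij : j ≠ i) : x j ≤ 1 - x i := by
  classical
  rw [← sum_erase_eq_one_sub_of_mem_stdSimplex hx i]
  exact Finset.single_le_sum (fun k _ => hx.1 k) (Finset.mem_erase.2 ⟨hij, Finset.mem_univ j⟩)

theorem kuramotoVelocity_le_of_forall_le (hθ : MonotoneOn θ (Icc 0 1)) (hθ0 : 0 ≤ θ 0)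
    (hx : ∀ k, x k ∈ Icc 0 1) (hi : ∀ k, x k ≤ x i) (j : ι) :
    kuramotoVelocity θ x j ≤ kuramotoVelocity θ x i := by
  refine Finset.sum_le_sum fun k _ => ?_
  have hmin : min (x j) (x k) ∈ Icc 0 1 :=
    ⟨le_min (hx j).1 (hx k).1, (min_le_right _ _).trans (hx k).2⟩
  rw [min_eq_right (hi k)]
  calc θ (min (x j) (x k)) * (x j - x k) ≤ θ (min (x j) (x k)) * (x i - x k) :=
        mul_le_mul_of_nonneg_left (sub_le_sub_right (hi j) _)
          (hθ0.trans (hθ (left_mem_Icc.2 zero_le_one) hmin hmin.1))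
    _ ≤ θ (x k) * (x i - x k) :=
        mul_le_mul_of_nonneg_right (hθ hmin (hx k) (min_le_right _ _)) (sub_nonneg.2 (hi k))

theorem kuramotoVelocity_le_card_mul (hθ : MonotoneOn θ (Icc 0 1)) (hθ0 : 0 ≤ θ 0)
    (hx : x ∈ stdSimplex ℝ ι) (i : ι) :
    kuramotoVelocity θ x i ≤ Fintype.card ι * θ (1 - x i) := by
  have hx01 := mem_Icc_of_mem_stdSimplex hx
  have hθnonneg : ∀ r ∈ Icc (0 : ℝ) 1, 0 ≤ θ r := fun r hr =>
    hθ0.trans (hθ (left_mem_Icc.2 zero_le_one) hr hr.1)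
  have hyi : 1 - x i ∈ Icc (0 : ℝ) 1 := Icc.mem_iff_one_sub_mem.1 (hx01 i)
  suffices ∀ k, θ (min (x i) (x k)) * (x i - x k) ≤ θ (1 - x i) by
    simpa only [kuramotoVelocity, nsmul_eq_mul, Finset.card_univ] using
      Finset.sum_le_card_nsmul Finset.univ _ _ fun k _ => this k
  intro k
  rcases le_total (x i) (x k) with hik | hki
  · rw [min_eq_left hik]
    exact (mul_nonpos_of_nonneg_of_nonpos (hθnonneg _ (hx01 i)) (sub_nonpos.2 hik)).trans
      (hθnonneg _ hyi)
  rcases eq_or_ne k i with rfl | hne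
  · simpa only [sub_self, mul_zero] using hθnonneg _ hyi
  · rw [min_eq_right hki]
    calc θ (x k) * (x i - x k) ≤ θ (x k) * 1 :=
          mul_le_mul_of_nonneg_left (by linarith [(hx01 i).2, (hx01 k).1]) (hθnonneg _ (hx01 k))
      _ ≤ θ (1 - x i) := by
          rw [mul_one]
          exact hθ (hx01 k) hyi (le_one_sub_of_mem_stdSimplex hx hne)

theorem mul_sum_erase_le_kuramotoVelocity [DecidableEq ι] (hδ : 0 ≤ δ) (hθ : ∀ k, 0 ≤ θ (x k))
    (hgap : ∀ k ≠ i, δ ≤ x i - x k) :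
    δ * ∑ k ∈ Finset.univ.erase i, θ (x k) ≤ kuramotoVelocity θ x i := by
  rw [kuramotoVelocity, ← Finset.add_sum_erase _ _ (Finset.mem_univ i), sub_self, mul_zero,
    zero_add, Finset.mul_sum]
  refine Finset.sum_le_sum fun k hk => ?_
  have hk' := hgap k (Finset.ne_of_mem_erase hk)
  rw [min_eq_right (by linarith), mul_comm]
  exact mul_le_mul_of_nonneg_left hk' (hθ k)

theorem card_rpow_mul_one_sub_rpow_le_sum_erase [DecidableEq ι] (hα : 1 ≤ α)
    (hx : x ∈ stdSimplex ℝ ι) (i : ι) :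
    (Fintype.card ι : ℝ) ^ (1 - α) * (1 - x i) ^ α ≤ ∑ k ∈ Finset.univ.erase i, x k ^ α := by
  have hcard : (0 : ℝ) < Fintype.card ι := Nat.cast_pos.2 (Fintype.card_pos_iff.2 ⟨i⟩)
  rw [← neg_sub α 1, Real.rpow_neg hcard.le, inv_mul_le_iff₀ (Real.rpow_pos_of_pos hcard _),
    ← sum_erase_eq_one_sub_of_mem_stdSimplex hx i]
  refine (Real.rpow_sum_le_const_mul_sum_rpow_of_nonneg _ hα fun k _ => hx.1 k).trans ?_
  refine mul_le_mul_of_nonneg_right ?_ (Finset.sum_nonneg fun k _ => Real.rpow_nonneg (hx.1 k) α)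
  exact Real.rpow_le_rpow (Nat.cast_nonneg _)
    (Nat.cast_le.2 (Finset.card_le_univ _)) (sub_nonneg.2 hα)

theorem mul_one_sub_rpow_le_kuramotoVelocity {a : ℝ} (hα : 1 ≤ α) (ha : 0 ≤ a) (hδ : 0 ≤ δ)
    (hθ : ∀ r ∈ Icc 0 1, a * r ^ α ≤ θ r) (hx : x ∈ stdSimplex ℝ ι)
    (hgap : ∀ k ≠ i, δ ≤ x i - x k) :
    δ * (Fintype.card ι : ℝ) ^ (1 - α) * a * (1 - x i) ^ α ≤ kuramotoVelocity θ x i := by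
  classical
  have hθx (k : ι) : a * x k ^ α ≤ θ (x k) := hθ _ (mem_Icc_of_mem_stdSimplex hx k)
  have hθnonneg (k : ι) : 0 ≤ θ (x k) :=
    (mul_nonneg ha (Real.rpow_nonneg (hx.1 k) α)).trans (hθx k)
  calc δ * (Fintype.card ι : ℝ) ^ (1 - α) * a * (1 - x i) ^ α
      = δ * (a * ((Fintype.card ι : ℝ) ^ (1 - α) * (1 - x i) ^ α)) := by ring
    _ ≤ δ * (a * ∑ k ∈ Finset.univ.erase i, x k ^ α) := by
        gcongr
        exact card_rpow_mul_one_sub_rpow_le_sum_erase hα hx i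
    _ ≤ δ * ∑ k ∈ Finset.univ.erase i, θ (x k) := by
        rw [Finset.mul_sum]
        gcongr with k
        exact hθx k
    _ ≤ kuramotoVelocity θ x i := mul_sum_erase_le_kuramotoVelocity hδ hθnonneg hgap

end VelocityField

/-- A solution on `[0, ∞)` of the first-order Kuramoto model on the complete graph with vertex
set `ι` that stays in the standard simplex. Values of `ρ` at negative times are irrelevant: the
derivative at `0` is one-sided. -/
structure IsKuramotoSolution {ι : Type*} [Fintype ι] (θ : ℝ → ℝ) (ρ : ℝ → ι → ℝ) : Prop where
  hasDerivWithinAt : ∀ t ≥ 0, ∀ j,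
    HasDerivWithinAt (fun s => ρ s j) (kuramotoVelocity θ (ρ t) j) (Ici 0) t
  mem_stdSimplex : ∀ t ≥ 0, ρ t ∈ stdSimplex ℝ ι

namespace IsKuramotoSolution

variable {ι : Type*} [Fintype ι] {θ : ℝ → ℝ} {ρ : ℝ → ι → ℝ} {i : ι} {α b δ t : ℝ}

theorem le_gap (hρ : IsKuramotoSolution θ ρ) (hθ : MonotoneOn θ (Icc 0 1)) (hθ0 : 0 ≤ θ 0)
    (hδ : 0 < δ) (hgap : ∀ j ≠ i, δ ≤ ρ 0 i - ρ 0 j) (ht : 0 ≤ t) :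
    ∀ j ≠ i, δ ≤ ρ t i - ρ t j := by
  intro j hj
  refine le_of_nonneg_deriv_of_pos (ι := {j // j ≠ i}) (g := fun s j => ρ s i - ρ s j)
    (fun s hs j => (hρ.hasDerivWithinAt s hs i).sub (hρ.hasDerivWithinAt s hs j)) ?_ hδ
    (fun j => hgap j j.2) ht ⟨j, hj⟩
  intro s hs hlead j
  have hmax : ∀ k, ρ s k ≤ ρ s i := fun k => by
    rcases eq_or_ne k i with rfl | hk
    · exact le_rfl
    · exact (sub_pos.1 (hlead ⟨k, hk⟩)).le
  exact sub_nonneg.2 (kuramotoVelocity_le_of_forall_le hθ hθ0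
    (mem_Icc_of_mem_stdSimplex (hρ.mem_stdSimplex s hs)) hmax j)

theorem hasDerivWithinAt_one_sub (hρ : IsKuramotoSolution θ ρ) (i : ι) :
    ∀ t ≥ 0, HasDerivWithinAt (fun s => 1 - ρ s i) (-kuramotoVelocity θ (ρ t) i) (Ici 0) t :=
  fun t ht => (hρ.hasDerivWithinAt t ht i).const_sub 1

theorem one_sub_mem_Icc (hρ : IsKuramotoSolution θ ρ) (i : ι) (ht : 0 ≤ t) :
    1 - ρ t i ∈ Icc (0 : ℝ) 1 :=
  Icc.mem_iff_one_sub_mem.1 (mem_Icc_of_mem_stdSimplex (hρ.mem_stdSimplex t ht) i)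

theorem velocity_le (hρ : IsKuramotoSolution θ ρ) (hθ : MonotoneOn θ (Icc 0 1)) (hθ0 : 0 ≤ θ 0)
    (hθb : ∀ r ∈ Icc 0 1, θ r ≤ b * r ^ α) (i : ι) (ht : 0 ≤ t) :
    kuramotoVelocity θ (ρ t) i ≤ Fintype.card ι * b * (1 - ρ t i) ^ α := by
  rw [mul_assoc]
  exact (kuramotoVelocity_le_card_mul hθ hθ0 (hρ.mem_stdSimplex t ht) i).trans
    (mul_le_mul_of_nonneg_left (hθb _ (hρ.one_sub_mem_Icc i ht)) (Nat.cast_nonneg _))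

theorem one_sub_pos (hρ : IsKuramotoSolution θ ρ) (hθ : MonotoneOn θ (Icc 0 1)) (hθ0 : 0 ≤ θ 0)
    (hα : 1 ≤ α) (hθb : ∀ r ∈ Icc 0 1, θ r ≤ b * r ^ α) (hi : ρ 0 i < 1) (ht : 0 ≤ t) :
    0 < 1 - ρ t i := by
  have hb : 0 ≤ b := by
    have h1 : (1 : ℝ) ∈ Icc 0 1 := right_mem_Icc.2 zero_le_one
    have hθ1 : 0 ≤ θ 1 := hθ0.trans (hθ (left_mem_Icc.2 zero_le_one) h1 zero_le_one)
    simpa only [Real.one_rpow, mul_one] using hθ1.trans (hθb 1 h1)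
  refine pos_of_neg_mul_le_deriv (y := fun s => 1 - ρ s i) (c := Fintype.card ι * b)
    (hρ.hasDerivWithinAt_one_sub i) (fun s hs => neg_le_neg ?_) (sub_pos.2 hi) ht
  have hy := hρ.one_sub_mem_Icc i hs
  exact (hρ.velocity_le hθ hθ0 hθb i hs).trans
    (mul_le_mul_of_nonneg_left (Real.rpow_le_self_of_le_one hy.1 hy.2 hα) (by positivity))

end IsKuramotoSolution

theorem kuramoto_complete_algebraic_convergence_general {ι : Type*} [Fintype ι] {θ : ℝ → ℝ}
    {ρ : ℝ → ι → ℝ} {i : ι} {α a b δ : ℝ} (hρ : IsKuramotoSolution θ ρ) (hα : 1 < α)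
    (hθ : MonotoneOn θ (Icc 0 1)) (ha : 0 ≤ a) (hθa : ∀ r ∈ Icc 0 1, a * r ^ α ≤ θ r)
    (hθb : ∀ r ∈ Icc 0 1, θ r ≤ b * r ^ α) (hi : ρ 0 i < 1) (hδ : 0 < δ)
    (hgap : ∀ j ≠ i, δ ≤ ρ 0 i - ρ 0 j) :
    ∀ t ≥ 0,
      ((1 - ρ 0 i) ^ (1 - α) + Fintype.card ι * b * (α - 1) * t) ^ (-(1 / (α - 1))) ≤ 1 - ρ t i ∧
      1 - ρ t i ≤ ((1 - ρ 0 i) ^ (1 - α) + δ * (Fintype.card ι : ℝ) ^ (1 - α) * a * (α - 1) * t) ^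
        (-(1 / (α - 1))) := by
  intro t ht
  have hθ0 : 0 ≤ θ 0 := by
    simpa only [Real.zero_rpow (zero_lt_one.trans hα).ne', mul_zero] using
      hθa 0 (left_mem_Icc.2 zero_le_one)
  have hpos : ∀ s ≥ 0, 0 < 1 - ρ s i := fun s hs => hρ.one_sub_pos hθ hθ0 hα.le hθb hi hs
  have hderiv := hρ.hasDerivWithinAt_one_sub i
  constructor
  · exact rpow_le_of_neg_mul_rpow_le_deriv hα hderiv hpos
      (fun s hs => neg_le_neg (hρ.velocity_le hθ hθ0 hθb i hs)) ht
  · exact le_rpow_of_deriv_le_neg_mul_rpow hα (by positivity) hderiv hpos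
      (fun s hs => neg_le_neg (mul_one_sub_rpow_le_kuramotoVelocity hα.le ha hδ.le hθa
        (hρ.mem_stdSimplex s hs) (hρ.le_gap hθ hθ0 hδ hgap hs))) ht

theorem le_maxExcept {n : ℕ} (hn : 2 ≤ n) {i j : Fin n} (hij : j ≠ i) (f : Fin n → ℝ) :
    f j ≤ maxExcept hn i f :=
  Finset.le_sup' f (Finset.mem_erase.2 ⟨hij, Finset.mem_univ j⟩)

/-- First-order Kuramoto model on the complete graph with `n` vertices,
`κ = 1` and `θ̃(x) = x^α` (real power, `α > 1`): if vertex `1` (the index `i0` with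
`i0.val = 0`) is the unique initial maximizer with `ρ_1(0) < 1` and `δ` is the initial
leading gap, then for all `t ≥ 0`,
`((1-ρ_1(0))^{1-α} + n(α-1)t)^{-1/(α-1)} ≤ 1-ρ_1(t)
  ≤ ((1-ρ_1(0))^{1-α} + δ n^{1-α}(α-1)t)^{-1/(α-1)}`;
in particular `1-ρ_1(t)` decays algebraically like `t^{-1/(α-1)}`. -/
theorem kuramoto_complete_algebraic_convergence
    (n : ℕ) (hn : 2 ≤ n) (α : ℝ) (hα : 1 < α)
    (ρ : ℝ → Fin n → ℝ)
    (hode : ∀ t ≥ (0 : ℝ), ∀ j : Fin n, HasDerivAt (fun s => ρ s j)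
      (∑ k : Fin n, (min (ρ t j) (ρ t k)) ^ α * (ρ t j - ρ t k)) t)
    (hrange : ∀ t ≥ (0 : ℝ), ∀ j : Fin n, ρ t j ∈ Set.Icc (0 : ℝ) 1)
    (hsum : ∀ t ≥ (0 : ℝ), ∑ j : Fin n, ρ t j = 1)
    (i0 : Fin n) (hi0 : (i0 : ℕ) = 0)
    (hmax : ∀ j : Fin n, j ≠ i0 → ρ 0 j < ρ 0 i0) (hlt1 : ρ 0 i0 < 1)
    (δ : ℝ) (hδ : δ = ρ 0 i0 - maxExcept hn i0 (ρ 0)) (hδpos : 0 < δ) :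
    ∀ t ≥ (0 : ℝ),
      ((1 - ρ 0 i0) ^ ((1 : ℝ) - α) + (n : ℝ) * (α - 1) * t) ^ (-(1 / (α - 1)))
        ≤ 1 - ρ t i0 ∧
      1 - ρ t i0 ≤
        ((1 - ρ 0 i0) ^ ((1 : ℝ) - α)
          + δ * (n : ℝ) ^ ((1 : ℝ) - α) * (α - 1) * t) ^ (-(1 / (α - 1))) := by
  have hρ : IsKuramotoSolution (· ^ α) ρ :=
    ⟨fun t ht j => (hode t ht j).hasDerivWithinAt,
      fun t ht => ⟨fun j => (hrange t ht j).1, hsum t ht⟩⟩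
  have hmono : MonotoneOn (fun r : ℝ => r ^ α) (Icc 0 1) :=
    (Real.monotoneOn_rpow_Ici_of_exponent_nonneg (by linarith)).mono Icc_subset_Ici_self
  simpa only [Fintype.card_fin, mul_one] using
    kuramoto_complete_algebraic_convergence_general hρ hα hmono zero_le_one
      (fun r _ => (one_mul (r ^ α)).le) (fun r _ => (one_mul (r ^ α)).ge) hlt1 hδpos
      (fun j hj => by linarith [le_maxExcept hn hj (ρ 0)])
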